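/- arXiv:2408.07411 — 2 statements merged into one kernel-verified Lean document; each statement's English description precedes it below -/
import Mathlib

section
/- Let k ≥ 1 and l ≥ 0 be integers and let Γ be a finite Abelian group of order (2k+1)·4·(4l+2). Then a Γ-magic rectangle set MRS_Γ(2k+1, 4; 4l+2) exists if and only if Γ has more than one involution. -/
/-!
Necessity. The sum of all elements of `Γ` is `8(2l+1)δ`, hence is killed by `2k+1`. Pairing `g` with
`-g` shows that it is also the sum of the involutions. There is an involution since `|Γ|` is even,
and a single involution would not be killed by the odd number `2k+1`.

Sufficiency. All rectangles constructed have row and column sums zero.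

* `ZeroMRS.lift` removes the factor `2l+1`. Take `K ≤ Γ` of order `2l+1` and two rectangles over
  `Γ ⧸ K`. Their entries lift to `Γ` with all sums still zero, and adding `± tᵢ κ` in row `i`, for
  `κ ∈ K`, turns each rectangle into `2l+1` rectangles over `Γ`.
* `Γ ⧸ K` has order `8(2k+1)` and is `L × Q` with `|Q| = 2k+1` odd. As `Γ` has two involutions, `L`
  is `(ℤ/2)³` or `ℤ/2 × ℤ/4` (`exists_embedding`).
* For `k = 1` we have `Q ≅ ℤ/3`, and two explicit rectangles are given for each `L`.
* For `k ≥ 2`, the rows of each rectangle are indexed by `Q = {0} ∪ {±q₁, …, ±q_k}`, and the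
  `Q`-components of row `q` are `q, -q, q, -q`. It remains to choose the `L`-components
  (`Labels`, `Labels.zeroMRS`): they are read from explicit tables for the five rows
  `0, ±q₁, ±q₂`, and a single table, with opposite entries in opposite rows, serves for every other
  pair `±q`. Five special rows are needed because for `(ℤ/2)³` no labels with this sign pattern
  exist for the three rows `0, ±q₁` alone.
-/

/-- A `Γ`-magic rectangle set `MRS_Γ(a, b; c)`. -/
def IsMagicRectangleSet (Γ : Type*) [AddCommGroup Γ] [Fintype Γ] (a b c : ℕ) : Prop :=
  ∃ (x : Fin c × Fin a × Fin b → Γ) (ω δ : Γ),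
    Function.Bijective x ∧
    (∀ (s : Fin c) (i : Fin a), ∑ j : Fin b, x (s, i, j) = ω) ∧
    (∀ (s : Fin c) (j : Fin b), ∑ i : Fin a, x (s, i, j) = δ)

/-! ### Rectangle sets with zero sums -/

/-- A family of rectangles with entries in `Γ`, all of whose row and column sums vanish and in
which every element of `Γ` occurs exactly once: the rectangles are indexed by `C`, the rows by `A`,
and there are four columns. -/
def ZeroMRS (Γ : Type*) [AddCommGroup Γ] (C A : Type*) [Fintype A] : Prop :=
  ∃ x : C → A → Fin 4 → Γ,
    Function.Bijective (fun p : C × A × Fin 4 => x p.1 p.2.1 p.2.2) ∧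
    (∀ s i, ∑ j, x s i j = 0) ∧ (∀ s j, ∑ i, x s i j = 0)

theorem ZeroMRS.map {Γ Γ' : Type*} [AddCommGroup Γ] [AddCommGroup Γ'] {C A : Type*} [Fintype A]
    (e : Γ ≃+ Γ') (h : ZeroMRS Γ C A) : ZeroMRS Γ' C A := by
  obtain ⟨x, hx, hr, hc⟩ := h
  refine ⟨fun s i j => e (x s i j), e.bijective.comp hx, fun s i => ?_, fun s j => ?_⟩
  · rw [← map_sum, hr, map_zero]
  · rw [← map_sum, hc, map_zero]

theorem ZeroMRS.reindex {Γ : Type*} [AddCommGroup Γ] {C A C' A' : Type*} [Fintype A] [Fintype A']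
    (eC : C' ≃ C) (eA : A' ≃ A) (h : ZeroMRS Γ C A) : ZeroMRS Γ C' A' := by
  obtain ⟨x, hx, hr, hc⟩ := h
  refine ⟨fun s i j => x (eC s) (eA i) j,
    hx.comp (eC.prodCongr (eA.prodCongr (Equiv.refl _))).bijective, fun s i => hr _ _,
    fun s j => ?_⟩
  rw [← hc (eC s) j]
  exact eA.sum_comp (fun i => x (eC s) i j)

/-! ### Lifting from a quotient by a subgroup of odd order -/

/-- A matrix over an abelian group may have any row sums `R` and column sums `S` with equal
totals. -/
theorem exists_row_col_sums {G : Type*} [AddCommGroup G] {A B : Type*} [Fintype A] [Fintype B]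
    [DecidableEq A] [DecidableEq B] (i₀ : A) (j₀ : B) (R : A → G) (S : B → G)
    (h : ∑ i, R i = ∑ j, S j) :
    ∃ m : A → B → G, (∀ i, ∑ j, m i j = R i) ∧ (∀ j, ∑ i, m i j = S j) := by
  refine ⟨fun i j => (if j = j₀ then R i else 0) + (if i = i₀ then S j else 0)
    - (if i = i₀ then if j = j₀ then ∑ i, R i else 0 else 0), fun i => ?_, fun j => ?_⟩
  · by_cases hi : i = i₀ <;> simp [hi, Finset.sum_sub_distrib, Finset.sum_add_distrib, h]
  · by_cases hj : j = j₀ <;> simp [hj, Finset.sum_sub_distrib, Finset.sum_add_distrib, h]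

/-- An odd number, at least three, of integers from `{±1, ±2}` may have sum zero. -/
theorem exists_row_multipliers (k : ℕ) (hk : 1 ≤ k) :
    ∃ t : Fin (2 * k + 1) → ℤ, ∑ i, t i = 0 ∧ ∀ i, t i ∣ 2 := by
  obtain ⟨k, rfl⟩ : ∃ k', k = k' + 1 := ⟨k - 1, by omega⟩
  have e : Fin (2 * (k + 1) + 1) ≃ Option (Fin (k + 1) × Bool) :=
    Fintype.equivOfCardEq (by simp; ring)
  let t : Option (Fin (k + 1) × Bool) → ℤ := fun o =>
    o.elim (-2) (fun p => if p.1 = 0 then 1 else if p.2 then 1 else -1)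
  refine ⟨fun i => t (e i), ?_, fun i => (?_ : ∀ o, t o ∣ 2) (e i)⟩
  · rw [e.sum_comp t]
    simp [t, Fintype.sum_option, Fintype.sum_prod_type]
  · rintro (_ | ⟨a, b⟩)
    · simp [t]
    · simp only [t, Option.elim]
      split_ifs <;> decide

theorem eq_zero_of_coprime_zsmul {G : Type*} [AddCommGroup G] {a b : ℤ} (hab : IsCoprime a b)
    {g : G} (ha : a • g = 0) (hb : b • g = 0) : g = 0 := by
  obtain ⟨r, s, h⟩ := hab
  rw [← one_zsmul g, ← h, add_zsmul, mul_zsmul, mul_zsmul, ha, hb]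
  simp

/-- Over each rectangle of the quotient lie `|K|` rectangles of `Γ`, one for every `κ ∈ K`: lift the
entries so that row and column sums are still zero, then add `± tᵢ κ` in row `i`, with alternating
signs along the rows and `∑ tᵢ = 0`. As the `tᵢ` divide `2` and `|K|` is odd, every element of each
coset is met exactly once. -/
theorem ZeroMRS.lift {Γ : Type*} [AddCommGroup Γ] [Finite Γ] (K : AddSubgroup Γ)
    (hK : Odd (Nat.card K)) (k : ℕ) (hk : 1 ≤ k) {C : Type*}
    (h : ZeroMRS (Γ ⧸ K) C (Fin (2 * k + 1))) : ZeroMRS Γ (C × K) (Fin (2 * k + 1)) := by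
  obtain ⟨y, hy, hr, hc⟩ := h
  obtain ⟨t, ht0, ht⟩ := exists_row_multipliers k hk
  have mk_sum : ∀ {ι : Type} (s : Finset ι) (f : ι → Γ ⧸ K),
      ((∑ i ∈ s, (f i).out : Γ) : Γ ⧸ K) = ∑ i ∈ s, f i := by
    intro ι s f
    have := map_sum (QuotientAddGroup.mk' K) (fun i => (f i).out) s
    simp only [QuotientAddGroup.mk'_apply, QuotientAddGroup.out_eq'] at this
    exact this
  have hrow : ∀ s i, -∑ j, (y s i j).out ∈ K := fun s i => by
    rw [neg_mem_iff, ← QuotientAddGroup.eq_zero_iff, mk_sum, hr]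
  have hcol : ∀ s j, -∑ i, (y s i j).out ∈ K := fun s j => by
    rw [neg_mem_iff, ← QuotientAddGroup.eq_zero_iff, mk_sum, hc]
  have hcorr : ∀ s, ∃ m : Fin (2 * k + 1) → Fin 4 → K,
      (∀ i, ∑ j, m i j = ⟨_, hrow s i⟩) ∧ (∀ j, ∑ i, m i j = ⟨_, hcol s j⟩) := by
    intro s
    apply exists_row_col_sums 0 0
    apply Subtype.ext
    simp only [AddSubgroup.val_finsetSum, Finset.sum_neg_distrib]
    rw [Finset.sum_comm]
  choose m hmr hmc using hcorr
  let σ : Fin 4 → ℤ := ![1, -1, 1, -1]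
  have hσ : ∑ j, σ j = 0 := by decide
  have hσ2 : ∀ j, σ j * σ j = 1 := by decide
  refine ⟨fun p i j => (y p.1 i j).out + m p.1 i j + (σ j * t i) • (p.2 : Γ), ⟨?_, ?_⟩, ?_, ?_⟩
  · rintro ⟨⟨s, κ⟩, i, j⟩ ⟨⟨s', κ'⟩, i', j'⟩ heq
    simp only at heq
    have hq : y s i j = y s' i' j' := by
      have := congrArg (QuotientAddGroup.mk' K) heq
      simp only [map_add, map_zsmul, QuotientAddGroup.mk'_apply, QuotientAddGroup.out_eq',
        (QuotientAddGroup.eq_zero_iff _).2 (SetLike.coe_mem _), smul_zero, add_zero] at this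
      exact this
    have := @hy.1 (s, i, j) (s', i', j') hq
    simp only [Prod.mk.injEq] at this
    obtain ⟨rfl, rfl, rfl⟩ := this
    have h1 : (t i) • (κ - κ') = 0 := by
      have h2 : (σ j * t i) • (κ - κ') = 0 := by
        apply Subtype.ext
        have := add_left_cancel heq
        simp [smul_sub, this]
      have h3 := congrArg (σ j • ·) h2
      simpa only [← mul_zsmul, ← mul_assoc, hσ2, one_mul, smul_zero] using h3
    have h4 : (2 : ℤ) • (κ - κ') = 0 := by
      obtain ⟨c, hc⟩ := ht i
      rw [hc, mul_comm, mul_zsmul, h1, smul_zero]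
    have h5 : κ - κ' = 0 := by
      refine eq_zero_of_coprime_zsmul (b := (Nat.card K : ℤ)) ?_ h4 ?_
      · exact_mod_cast (Nat.coprime_two_left.2 hK).isCoprime
      · rw [natCast_zsmul, card_nsmul_eq_zero']
    simp [sub_eq_zero.1 h5]
  · intro g
    obtain ⟨⟨s, i, j⟩, hs⟩ := hy.2 (g : Γ ⧸ K)
    simp only at hs
    -- solve `(σ j * t i) • κ = g'` in `K`, using that `2` is invertible modulo `|K|`
    obtain ⟨g', hg'⟩ : ∃ g' : K, (g' : Γ) = g - (y s i j).out - m s i j := by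
      refine ⟨⟨_, ?_⟩, rfl⟩
      refine K.sub_mem ?_ (SetLike.coe_mem _)
      rw [← QuotientAddGroup.eq_zero_iff, QuotientAddGroup.mk_sub, QuotientAddGroup.out_eq', hs,
        sub_self]
    obtain ⟨κ, hκ⟩ : ∃ κ : K, (σ j * t i) • κ = g' := by
      obtain ⟨c, hc⟩ := ht i
      obtain ⟨r, hr⟩ := hK
      refine ⟨(-(σ j * c * r)) • g', ?_⟩
      rw [← mul_zsmul]
      have : σ j * t i * -(σ j * c * r) = 1 - (Nat.card K : ℤ) := by
        rw [hr]; push_cast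
        linear_combination (-(t i * c * r) : ℤ) * hσ2 j + (r : ℤ) * hc
      simp [this, sub_zsmul, card_nsmul_eq_zero']
    refine ⟨((s, κ), i, j), ?_⟩
    have := congrArg (Subtype.val) hκ
    rw [hg'] at this
    simp only [AddSubgroup.coe_zsmul] at this
    simp only [this]
    abel
  · intro p i
    have h1 := congrArg Subtype.val (hmr p.1 i)
    simp only [AddSubgroup.val_finsetSum] at h1
    rw [Finset.sum_add_distrib, Finset.sum_add_distrib, h1, ← Finset.sum_smul,
      ← Finset.sum_mul, hσ]
    simp
  · intro p j
    have h1 := congrArg Subtype.val (hmc p.1 j)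
    simp only [AddSubgroup.val_finsetSum] at h1
    rw [Finset.sum_add_distrib, Finset.sum_add_distrib, h1, ← Finset.sum_smul,
      ← Finset.mul_sum, ht0]
    simp

/-! ### The construction over `L × Q` -/

/-- In an abelian group of odd order `2k+1` the nonzero elements split into `k` pairs `{q, -q}`. -/
theorem exists_pairing {Q : Type*} [AddCommGroup Q] [Finite Q] (k : ℕ)
    (hQ : Nat.card Q = 2 * k + 1) :
    ∃ e : Option (Fin k × Bool) → Q, Function.Bijective e ∧ e none = 0 ∧
      ∀ i, e (some (i, true)) = -e (some (i, false)) := by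
  have hneg : ∀ q : Q, q = -q → q = 0 := by
    intro q hq
    refine eq_zero_of_coprime_zsmul (a := 2) (b := (Nat.card Q : ℤ)) ?_ ?_ ?_
    · exact_mod_cast (Nat.coprime_two_left.2 ⟨k, hQ⟩).isCoprime
    · rw [two_zsmul]; nth_rw 1 [hq]; simp
    · rw [natCast_zsmul, card_nsmul_eq_zero']
  let f := Finite.equivFin Q
  -- one element from each pair: the one that comes first in a fixed enumeration
  let T := {q : Q // f q < f (-q)}
  let e' : Option (T × Bool) → Q := fun o => o.elim 0 (fun p => if p.2 then -p.1.1 else p.1.1)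
  have hT0 : ∀ t : T, t.1 ≠ 0 := by
    rintro ⟨t, ht⟩ rfl
    simp at ht
  have he' : Function.Bijective e' := by
    constructor
    · have key : ∀ t t' : T, t.1 ≠ -t'.1 := by
        rintro ⟨t, ht⟩ ⟨t', ht'⟩ (h : t = -t')
        subst h
        rw [neg_neg] at ht
        exact lt_asymm ht ht'
      have key' : ∀ t t' : T, -t.1 ≠ t'.1 := fun t t' h => key t' t h.symm
      rintro (_ | ⟨t, _ | _⟩) (_ | ⟨t', _ | _⟩) h
      · rfl
      · exact absurd h.symm (hT0 t')
      · exact absurd (neg_eq_zero.1 h.symm) (hT0 t')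
      · exact absurd h (hT0 t)
      · rw [Subtype.ext (show t.1 = t'.1 from h)]
      · exact absurd h (key t t')
      · exact absurd (neg_eq_zero.1 h) (hT0 t)
      · exact absurd h (key' t t')
      · rw [Subtype.ext (neg_injective (show -t.1 = -t'.1 from h))]
    · intro q
      by_cases h0 : q = 0
      · exact ⟨none, h0.symm⟩
      rcases lt_trichotomy (f q) (f (-q)) with h | h | h
      · exact ⟨some (⟨q, h⟩, false), rfl⟩
      · exact absurd (hneg q (f.injective h)) h0
      · exact ⟨some (⟨-q, by rwa [neg_neg]⟩, true), by simp [e']⟩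
  have hcard : Nat.card T = k := by
    have := Nat.card_congr (Equiv.ofBijective e' he')
    rw [Finite.card_option, Nat.card_prod, hQ] at this
    simp at this
    omega
  let g : Fin k ≃ T := (Finite.equivFinOfCardEq hcard).symm
  refine ⟨fun o => e' (Equiv.optionCongr (g.prodCongr (Equiv.refl Bool)) o),
    he'.comp (Equiv.bijective _), rfl, fun i => ?_⟩
  simp [e']

/-- Whether the sign pattern `+ - + -` has a minus sign in column `j`. -/
def minus : Fin 4 → Bool := ![false, true, false, true]

/-- Labels in `L` for two rectangles, with rows indexed by a group `Q` of odd order. The entry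
`z ε j` is the label in the row of `0 ∈ Q`, for the rectangle `ε` and the column `j`; the entry
`T t s ε j` is the label in the row of `q` (`s = false`) or of `-q` (`s = true`), where `t = 0, 1`
stand for two special pairs `±q` and `t = 2` for all the other pairs. -/
structure Labels (L : Type*) [AddCommGroup L] where
  z : Bool → Fin 4 → L
  T : Fin 3 → Bool → Bool → Fin 4 → L
  z_row : ∀ ε, ∑ j, z ε j = 0
  T_row : ∀ t s ε, ∑ j, T t s ε j = 0
  z_bij : Function.Bijective (fun p : Bool × Fin 4 => z p.1 p.2)
  T_bij : ∀ t s, Function.Bijective (fun p : Bool × Fin 4 => T t (s ^^ minus p.2) p.1 p.2)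
  col : ∀ ε j, z ε j + (T 0 false ε j + T 0 true ε j) + (T 1 false ε j + T 1 true ε j) = 0
  col_two : ∀ ε j, T 2 false ε j + T 2 true ε j = 0

/-- In the row of `q` and the column `j` stands `± q`, together with the label of that row and
column. An element `q` of `Q` thus occurs in the rows of `q` and `-q`, and the bijectivity conditions
on the labels say that it meets each element of `L` once there. -/
theorem Labels.zeroMRS {L Q : Type*} [AddCommGroup L] [AddCommGroup Q] [Finite Q] (D : Labels L)
    (k : ℕ) (hk : 2 ≤ k) (hQ : Nat.card Q = 2 * k + 1) :
    ZeroMRS (L × Q) Bool (Option (Fin k × Bool)) := by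
  obtain ⟨e, he, he0, heneg⟩ := exists_pairing k hQ
  obtain ⟨k, rfl⟩ : ∃ k', k = k' + 1 + 1 := ⟨k - 2, by omega⟩
  let cls : Fin (k + 1 + 1) → Fin 3 := Fin.cons 0 (Fin.cons 1 fun _ => 2)
  let flip : Fin 4 → Option (Fin (k + 1 + 1) × Bool) → Option (Fin (k + 1 + 1) × Bool) :=
    fun j o => o.map fun p => (p.1, p.2 ^^ minus j)
  let F : Option (Fin (k + 1 + 1) × Bool) → Bool → Fin 4 → L :=
    fun o => o.elim D.z fun p => D.T (cls p.1) p.2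
  have hflip : ∀ j o, flip j (flip j o) = o := by
    rintro j (_ | ⟨i, s⟩) <;> simp [flip]
  have hF : ∀ o, Function.Bijective fun p : Bool × Fin 4 => F (flip p.2 o) p.1 p.2 := by
    rintro (_ | ⟨i, s⟩)
    · exact D.z_bij
    · exact D.T_bij (cls i) s
  refine ⟨fun ε r j => (F r ε j, e (flip j r)), ⟨?_, ?_⟩, ?_, ?_⟩
  · rintro ⟨ε, r, j⟩ ⟨ε', r', j'⟩ h
    simp only [Prod.mk.injEq] at h
    obtain ⟨h1, h2⟩ := h
    have h2 := he.1 h2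
    have h3 := @(hF (flip j r)).1 (ε, j) (ε', j') (by
      simp only [hflip]; rw [h2, hflip]; exact h1)
    simp only [Prod.mk.injEq] at h3
    obtain ⟨rfl, rfl⟩ := h3
    have := congrArg (flip j) h2
    rw [hflip, hflip] at this
    rw [this]
  · rintro ⟨a, q⟩
    obtain ⟨o, rfl⟩ := he.2 q
    obtain ⟨⟨ε, j⟩, h⟩ := (hF o).2 a
    exact ⟨(ε, flip j o, j), by simpa [hflip] using h⟩
  · rintro ε (_ | ⟨i, s⟩)
    · apply Prod.ext
      · simpa [Prod.fst_sum, F] using D.z_row ε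
      · simp [Prod.snd_sum, flip, he0]
    · apply Prod.ext
      · simpa [Prod.fst_sum, F] using D.T_row (cls i) s ε
      · cases s <;> simp [flip, heneg, Fin.sum_univ_four, minus]
  · intro ε j
    apply Prod.ext
    · rw [Prod.fst_sum]
      simp only [F, Fintype.sum_option, Fintype.sum_prod_type, Fin.sum_univ_succ,
        Fintype.sum_bool, Option.elim, cls, Fin.cons_zero, Fin.cons_succ]
      simp only [add_comm _ (D.T _ false ε j), D.col_two, Finset.sum_const_zero, add_zero]
      refine Eq.trans ?_ (D.col ε j)
      abel
    · rw [Prod.snd_sum]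
      simp only [Fintype.sum_option, Fintype.sum_prod_type, flip, Fintype.sum_bool]
      cases h : minus j <;> simp [he0, heneg]

/-! ### Explicit tables -/

/-- Binary decoding of the numbers below eight as elements of `(ZMod 2)³`. -/
def dec₁ (n : ℕ) : ZMod 2 × ZMod 2 × ZMod 2 := (((n / 4 : ℕ) : ZMod 2), ((n / 2 : ℕ) : ZMod 2), n)

/-- Decoding of the numbers below eight as elements of `ZMod 2 × ZMod 4`. -/
def dec₂ (n : ℕ) : ZMod 2 × ZMod 4 := (((n / 4 : ℕ) : ZMod 2), n)

/-- Splits a list of eight numbers into two rows of four and decodes. -/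
def tab {L : Type*} (dec : ℕ → L) (v : Fin 8 → ℕ) (ε : Bool) (j : Fin 4) : L :=
  dec (v (if ε then j.addNat 4 else j.castAdd 4))

/-- Chooses the row according to the sign. -/
def pick {α : Type*} (a b : α) (s : Bool) : α := if s then b else a

set_option maxRecDepth 20000 in
/-- Labels in `(ZMod 2)³`, found by computer search. -/
def labels₁ : Labels (ZMod 2 × ZMod 2 × ZMod 2) where
  z := tab dec₁ ![6, 0, 5, 3, 2, 4, 1, 7]
  T := ![pick (tab dec₁ ![1, 2, 0, 3, 2, 1, 5, 6]) (tab dec₁ ![4, 7, 0, 3, 7, 4, 5, 6]),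
    pick (tab dec₁ ![6, 1, 1, 6, 0, 2, 2, 0]) (tab dec₁ ![5, 4, 4, 5, 7, 3, 3, 7]),
    pick (tab dec₁ ![0, 1, 2, 3, 4, 5, 6, 7]) (tab dec₁ ![0, 1, 2, 3, 4, 5, 6, 7])]
  z_row := by decide
  T_row := by decide
  z_bij := by decide
  T_bij := by decide
  col := by decide
  col_two := by decide

set_option maxRecDepth 20000 in
/-- Labels in `ZMod 2 × ZMod 4`, found by computer search. -/
def labels₂ : Labels (ZMod 2 × ZMod 4) where
  z := tab dec₂ ![0, 3, 4, 5, 2, 7, 6, 1]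
  T := ![pick (tab dec₂ ![0, 1, 4, 7, 7, 3, 6, 0]) (tab dec₂ ![5, 1, 4, 2, 6, 5, 2, 3]),
    pick (tab dec₂ ![0, 0, 6, 6, 2, 4, 1, 5]) (tab dec₂ ![7, 3, 2, 4, 3, 5, 1, 7]),
    pick (tab dec₂ ![0, 3, 3, 2, 4, 7, 7, 6]) (tab dec₂ ![0, 1, 1, 2, 4, 5, 5, 6])]
  z_row := by decide
  T_row := by decide
  z_bij := by decide
  T_bij := by decide
  col := by decide
  col_two := by decide

set_option maxRecDepth 40000 in
theorem zeroMRS_three₁ : ZeroMRS ((ZMod 2 × ZMod 2 × ZMod 2) × ZMod 3) Bool (Fin 3) := by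
  refine ⟨pick
    ![![(dec₁ 2, 1), (dec₁ 4, 1), (dec₁ 1, -1), (dec₁ 7, -1)],
      ![(dec₁ 1, 1), (dec₁ 6, -1), (dec₁ 5, 1), (dec₁ 2, -1)],
      ![(dec₁ 3, 1), (dec₁ 2, 0), (dec₁ 4, 0), (dec₁ 5, -1)]]
    ![![(dec₁ 4, -1), (dec₁ 0, -1), (dec₁ 7, 0), (dec₁ 3, -1)],
      ![(dec₁ 3, 0), (dec₁ 0, 0), (dec₁ 6, 0), (dec₁ 5, 0)],
      ![(dec₁ 7, 1), (dec₁ 0, 1), (dec₁ 1, 0), (dec₁ 6, 1)]], ?_, ?_, ?_⟩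
  · rw [Fintype.bijective_iff_injective_and_card]
    constructor <;> decide
  · decide
  · decide

set_option maxRecDepth 40000 in
theorem zeroMRS_three₂ : ZeroMRS ((ZMod 2 × ZMod 4) × ZMod 3) Bool (Fin 3) := by
  refine ⟨pick
    ![![(dec₂ 7, -1), (dec₂ 1, 0), (dec₂ 0, -1), (dec₂ 4, -1)],
      ![(dec₂ 5, 0), (dec₂ 3, 0), (dec₂ 2, 1), (dec₂ 6, -1)],
      ![(dec₂ 0, 1), (dec₂ 0, 0), (dec₂ 2, 0), (dec₂ 2, -1)]]
    ![![(dec₂ 1, -1), (dec₂ 3, 1), (dec₂ 1, 1), (dec₂ 3, -1)],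
      ![(dec₂ 4, 1), (dec₂ 4, 0), (dec₂ 5, 1), (dec₂ 7, 1)],
      ![(dec₂ 7, 0), (dec₂ 5, -1), (dec₂ 6, 1), (dec₂ 6, 0)]], ?_, ?_, ?_⟩
  · rw [Fintype.bijective_iff_injective_and_card]
    constructor <;> decide
  · decide
  · decide

/-! ### Decomposition of the group -/

/-- The converse of Lagrange's theorem for abelian groups. -/
theorem exists_addSubgroup_card (d : ℕ) {G : Type*} [AddCommGroup G] [Finite G]
    (h : d ∣ Nat.card G) : ∃ K : AddSubgroup G, Nat.card K = d := by
  induction d using induction_on_primes generalizing G with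
  | zero => exact absurd (zero_dvd_iff.1 h) Nat.card_pos.ne'
  | one => exact ⟨⊥, by simp⟩
  | prime_mul p a hp ih =>
    have := Fact.mk hp
    obtain ⟨g, hg⟩ := exists_prime_addOrderOf_dvd_card' (G := G) p ((dvd_mul_right p a).trans h)
    let Z := AddSubgroup.zmultiples g
    have hZ : Nat.card Z = p := by rw [Nat.card_zmultiples, hg]
    have hGZ : Nat.card G = p * Nat.card (G ⧸ Z) := by
      rw [AddSubgroup.card_eq_card_quotient_mul_card_addSubgroup Z, hZ, mul_comm]
    have ha : a ∣ Nat.card (G ⧸ Z) := by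
      rw [hGZ] at h
      exact Nat.dvd_of_mul_dvd_mul_left hp.pos h
    obtain ⟨K, hK⟩ := ih ha
    refine ⟨K.comap (QuotientAddGroup.mk' Z), ?_⟩
    have h1 := AddSubgroup.card_mul_index (K.comap (QuotientAddGroup.mk' Z))
    rw [AddSubgroup.index_comap_of_surjective _ (QuotientAddGroup.mk'_surjective Z), hGZ,
      ← AddSubgroup.card_mul_index K, hK, ← mul_assoc] at h1
    exact Nat.eq_of_mul_eq_mul_right (Nat.pos_of_ne_zero K.index_ne_zero_of_finite) h1

/-- The homomorphism from `ZMod n` that sends `1` to `g`. -/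
def zmodHom {G : Type*} [AddCommGroup G] (n : ℕ) (g : G) (h : n • g = 0) : ZMod n →+ G :=
  ZMod.lift n ⟨zmultiplesHom G g, by simpa using h⟩

theorem zmodHom_natCast {G : Type*} [AddCommGroup G] (n : ℕ) (g : G) (h : n • g = 0) (a : ℕ) :
    zmodHom n g h (a : ZMod n) = a • g := by
  have := ZMod.lift_coe n ⟨zmultiplesHom G g, by simpa using h⟩ (a : ℤ)
  simpa [zmodHom] using this

theorem zmodHom_one {G : Type*} [AddCommGroup G] (n : ℕ) (g : G) (h : n • g = 0) :
    zmodHom n g h 1 = g := by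
  simpa using zmodHom_natCast n g h 1

theorem forall_zmod_two {p : ZMod 2 → Prop} : (∀ x, p x) ↔ p 0 ∧ p 1 :=
  Fin.forall_fin_two

theorem forall_zmod_four {p : ZMod 4 → Prop} :
    (∀ x, p x) ↔ p 0 ∧ p 1 ∧ p (2 : ℕ) ∧ p (3 : ℕ) := by
  refine ⟨fun h => ⟨h _, h _, h _, h _⟩, fun h x => ?_⟩
  fin_cases x
  exacts [h.1, h.2.1, h.2.2.1, h.2.2.2]

/-- An element `w` of order four and an involution `y ≠ 2w` generate a copy of `ℤ/2 × ℤ/4`. -/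
theorem exists_two_four {G : Type*} [AddCommGroup G] {w y : G} (hw : w + w + (w + w) = 0)
    (hy : y + y = 0) (hw0 : w + w ≠ 0) (hy0 : y ≠ 0) (hwy : w + w ≠ y) :
    ∃ φ : ZMod 2 × ZMod 4 →+ G, Function.Injective φ := by
  have hw4 : 4 • w = 0 := by rw [← hw]; abel
  have hy2 : 2 • y = 0 := by rw [two_nsmul, hy]
  refine ⟨(zmodHom 2 y hy2).coprod (zmodHom 4 w hw4), ?_⟩
  rw [injective_iff_map_eq_zero]
  simp only [Prod.forall, AddMonoidHom.coprod_apply]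
  rw [forall_zmod_two, forall_zmod_four, forall_zmod_four]
  simp only [map_zero, zmodHom_one, zmodHom_natCast, zero_add, add_zero]
  refine ⟨⟨fun _ => rfl, fun h => ?_, fun h => ?_, fun h => ?_⟩, fun h => ?_, fun h => ?_,
    fun h => ?_, fun h => ?_⟩ <;> exfalso
  · exact hw0 (by rw [h, add_zero])
  · exact hw0 (by rw [← two_nsmul, h])
  · apply hw0
    have : w + w = 2 • (3 • w) - (w + w + (w + w)) := by abel
    rw [this, h, hw]; simp
  · exact hy0 h
  · apply hw0
    have : w + w = 2 • (y + w) - (y + y) := by abel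
    rw [this, h, hy]; simp
  · apply hwy
    have : w + w = (y + 2 • w) - (y + y) + y := by abel
    rw [this, h, hy]; simp
  · apply hw0
    have : w + w = 2 • (y + 3 • w) - (y + y) - (w + w + (w + w)) := by abel
    rw [this, h, hy, hw]; simp

/-- If the order of `G` is `8m` with `m` odd, then a subgroup of order eight contains every
involution; having two of them, it is `(ℤ/2)³` or `ℤ/2 × ℤ/4`. -/
theorem exists_embedding {G : Type*} [AddCommGroup G] [Finite G] (m : ℕ) (hm : Odd m)
    (hG : Nat.card G = 8 * m) (hinv : 1 < Nat.card {g : G // g ≠ 0 ∧ g + g = 0}) :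
    (∃ φ : ZMod 2 × ZMod 2 × ZMod 2 →+ G, Function.Injective φ) ∨
      ∃ φ : ZMod 2 × ZMod 4 →+ G, Function.Injective φ := by
  obtain ⟨S, hS⟩ := exists_addSubgroup_card 8 (G := G) ⟨m, hG⟩
  have hidx : S.index = m := by
    have := S.card_mul_index
    rw [hS, hG] at this
    omega
  have hmem : ∀ g : G, g + g = 0 → g ∈ S := by
    intro g hg
    have h1 := S.nsmul_index_mem g
    obtain ⟨r, hr⟩ := hm
    have : S.index • g = g := by
      rw [hidx, hr, add_nsmul, mul_comm, mul_nsmul', two_nsmul, hg]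
      simp
    rwa [this] at h1
  rw [Finite.one_lt_card_iff_nontrivial] at hinv
  obtain ⟨⟨u, hu0, hu⟩, ⟨v, hv0, hv⟩, huv⟩ := hinv
  replace huv : u ≠ v := fun h => huv (Subtype.ext h)
  have huv0 : u + v ≠ 0 := fun h => huv (add_right_cancel (h.trans hv.symm))
  have hu2 : 2 • u = 0 := by rw [two_nsmul, hu]
  have hv2 : 2 • v = 0 := by rw [two_nsmul, hv]
  -- the four-group generated by `u` and `v`
  let ψ : ZMod 2 × ZMod 2 →+ G := (zmodHom 2 u hu2).coprod (zmodHom 2 v hv2)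
  have hψ : Function.Injective ψ := by
    rw [injective_iff_map_eq_zero]
    simp only [ψ, Prod.forall, AddMonoidHom.coprod_apply]
    rw [forall_zmod_two, forall_zmod_two, forall_zmod_two]
    simp [zmodHom_one, hu0, hv0, huv0]
  have hV : Nat.card ψ.range = 4 := by
    rw [← Nat.card_congr (AddMonoidHom.ofInjective hψ).toEquiv]
    simp
  have hVmem : ∀ g, g ∈ ψ.range ↔ g = 0 ∨ g = v ∨ g = u ∨ g = u + v := by
    intro g
    rw [← not_iff_not]
    simp only [AddMonoidHom.mem_range, not_exists, not_or, Prod.forall]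
    rw [forall_zmod_two, forall_zmod_two, forall_zmod_two]
    simp [ψ, zmodHom_one, eq_comm, and_assoc]
  have hVS : ψ.range ≤ S := by
    intro g hg
    rcases (hVmem g).1 hg with rfl | rfl | rfl | rfl
    exacts [S.zero_mem, hmem _ hv, hmem _ hu, S.add_mem (hmem _ hu) (hmem _ hv)]
  obtain ⟨w, hwS, hw⟩ : ∃ w ∈ S, w ∉ ψ.range := by
    by_contra! hcon
    have := AddSubgroup.card_le_of_le (show S ≤ ψ.range from hcon)
    omega
  -- the four-group has index two in `S`
  have h2w : w + w ∈ ψ.range := by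
    have h1 := (ψ.range.addSubgroupOf S).card_mul_index
    rw [Nat.card_congr (AddSubgroup.addSubgroupOfEquivOfLe hVS).toEquiv, hV, hS] at h1
    have h2 := (ψ.range.addSubgroupOf S).nsmul_index_mem ⟨w, hwS⟩
    rw [show (ψ.range.addSubgroupOf S).index = 2 by omega, two_nsmul] at h2
    exact h2
  have hw4 : w + w + (w + w) = 0 := by
    rcases (hVmem _).1 h2w with h | h | h | h <;> rw [h]
    exacts [add_zero _, hv, hu, by rw [add_add_add_comm, hu, hv, add_zero]]
  by_cases hw0 : w + w = 0
  · left
    have hw2 : 2 • w = 0 := by rw [two_nsmul, hw0]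
    refine ⟨ψ.coprod (zmodHom 2 w hw2) |>.comp
      (AddEquiv.prodAssoc (M := ZMod 2) (N := ZMod 2) (P := ZMod 2)).symm.toAddMonoidHom, ?_⟩
    refine Function.Injective.comp (g := ψ.coprod (zmodHom 2 w hw2)) ?_
      (AddEquiv.prodAssoc (M := ZMod 2) (N := ZMod 2) (P := ZMod 2)).symm.injective
    rw [injective_iff_map_eq_zero]
    rintro ⟨a, b⟩
    revert b
    rw [forall_zmod_two]
    simp only [AddMonoidHom.coprod_apply, map_zero, add_zero, zmodHom_one]
    refine ⟨fun h => ?_, fun h => absurd ?_ hw⟩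
    · rw [(injective_iff_map_eq_zero ψ).1 hψ a h]; rfl
    · rw [← neg_mem_iff, ← eq_neg_of_add_eq_zero_left h]
      exact ⟨a, rfl⟩
  · right
    by_cases h : w + w = u
    · exact exists_two_four hw4 hv hw0 hv0 (h ▸ huv)
    · exact exists_two_four hw4 hu hw0 hu0 h

/-! ### Assembly -/

/-- The subgroup `L` of order eight embeds into `Γ ⧸ K`, as `|K|` is odd, and together with a
subgroup `Q` of odd order `2k+1` it makes up all of `Γ ⧸ K`. -/
theorem ZeroMRS.of_injective {L Γ : Type*} [AddCommGroup L] [AddCommGroup Γ] [Finite Γ]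
    (D : Labels L) (h3 : ZeroMRS (L × ZMod 3) Bool (Fin 3)) (hL : Nat.card L = 8) (φ : L →+ Γ)
    (hφ : Function.Injective φ) (k l : ℕ) (hk : 1 ≤ k)
    (hcard : Nat.card Γ = (2 * k + 1) * 4 * (4 * l + 2)) :
    ZeroMRS Γ (Fin (4 * l + 2)) (Fin (2 * k + 1)) := by
  obtain ⟨K, hK⟩ := exists_addSubgroup_card (2 * l + 1) (G := Γ)
    ⟨8 * (2 * k + 1), by rw [hcard]; ring⟩
  have hquot : Nat.card (Γ ⧸ K) = 8 * (2 * k + 1) := by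
    have := AddSubgroup.card_eq_card_quotient_mul_card_addSubgroup K
    rw [hK, hcard] at this
    refine Nat.eq_of_mul_eq_mul_right (Nat.succ_pos (2 * l)) ?_
    rw [Nat.succ_eq_add_one, ← this]; ring
  obtain ⟨Q, hQ⟩ := exists_addSubgroup_card (2 * k + 1) (G := Γ ⧸ K) ⟨8, by rw [hquot]; ring⟩
  have hfin : Finite L := Nat.finite_of_card_ne_zero (by omega)
  have h8 : ∀ a : L, (8 : ℤ) • a = 0 := fun a => by
    have := card_nsmul_eq_zero' (x := a)
    rw [hL] at this
    exact_mod_cast this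
  have hodd : ∀ r : ℕ, IsCoprime (8 : ℤ) ((2 * r + 1 : ℕ) : ℤ) := fun r => by
    have h : Nat.Coprime (2 ^ 3) (2 * r + 1) :=
      Nat.Coprime.pow_left 3 (Nat.coprime_two_left.2 ⟨r, rfl⟩)
    exact_mod_cast h.isCoprime
  let φ' : L →+ Γ ⧸ K := (QuotientAddGroup.mk' K).comp φ
  have hφ' : Function.Injective φ' := by
    rw [injective_iff_map_eq_zero]
    intro a ha
    refine hφ ?_
    rw [map_zero]
    have haK : φ a ∈ K := (QuotientAddGroup.eq_zero_iff _).1 ha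
    refine eq_zero_of_coprime_zsmul (hodd l) (by rw [← map_zsmul, h8, map_zero]) ?_
    have : Nat.card K • (⟨φ a, haK⟩ : K) = 0 := card_nsmul_eq_zero'
    rw [natCast_zsmul, ← hK]
    exact congrArg Subtype.val this
  have hinj : Function.Injective (φ'.coprod Q.subtype) := by
    rw [injective_iff_map_eq_zero]
    rintro ⟨a, q⟩ h
    simp only [AddMonoidHom.coprod_apply, AddSubgroup.subtype_apply] at h
    have hq : q = 0 := by
      refine eq_zero_of_coprime_zsmul (hodd k) ?_ ?_
      · apply Subtype.ext
        rw [AddSubgroup.coe_zsmul, eq_neg_of_add_eq_zero_right h, ← map_neg, ← map_zsmul, h8,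
          map_zero, AddSubgroup.coe_zero]
      · rw [natCast_zsmul, ← hQ, card_nsmul_eq_zero']
    subst hq
    rw [AddSubgroup.coe_zero, add_zero] at h
    rw [(injective_iff_map_eq_zero φ').1 hφ' a h]
    rfl
  have hbij : Function.Bijective (φ'.coprod Q.subtype) := by
    rw [Nat.bijective_iff_injective_and_card]
    exact ⟨hinj, by rw [Nat.card_prod, hL, hQ, hquot]⟩
  have hLQ : ZeroMRS (L × Q) Bool (Fin (2 * k + 1)) := by
    obtain rfl | hk2 : k = 1 ∨ 2 ≤ k := by omega
    · have : Fact (Nat.Prime 3) := ⟨Nat.prime_three⟩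
      have hcyc : IsAddCyclic Q := isAddCyclic_of_prime_card (p := 3) hQ
      have e : ZMod 3 ≃+ Q :=
        (ZMod.ringEquivCongr hQ.symm).toAddEquiv.trans (zmodAddCyclicAddEquiv hcyc)
      exact h3.map (AddEquiv.prodCongr (AddEquiv.refl L) e)
    · exact (D.zeroMRS k hk2 hQ).reindex (Equiv.refl _)
        (Fintype.equivOfCardEq (by simp; ring))
  have hlift := (hLQ.map (AddEquiv.ofBijective _ hbij)).lift K (by rw [hK]; exact ⟨l, rfl⟩) k hk
  refine hlift.reindex (Finite.equivFinOfCardEq ?_).symm (Equiv.refl _)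
  rw [Nat.card_prod, hK]
  simp
  ring

/-! ### Necessity -/

/-- In the sum of all elements, `g` cancels against `-g` unless `2g = 0`. -/
theorem sum_eq_sum_filter {Γ : Type*} [AddCommGroup Γ] [Fintype Γ] [DecidableEq Γ] :
    ∑ g : Γ, g = ∑ g with g + g = 0, g := by
  rw [← Finset.sum_filter_add_sum_filter_not Finset.univ (fun g : Γ => g + g = 0), add_eq_left]
  refine Finset.sum_involution (fun g _ => -g) (fun g _ => add_neg_cancel g) (fun g hg _ h => ?_)
    (fun g hg => ?_) (fun g _ => neg_neg g)
  · simp only [Finset.mem_filter, Finset.mem_univ, true_and] at hg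
    exact hg (by nth_rw 1 [← h]; simp)
  · simp only [Finset.mem_filter, Finset.mem_univ, true_and] at hg ⊢
    rwa [← neg_add, neg_eq_zero]

/-- The sum of all elements is `8(2l+1)δ`, so it vanishes when multiplied by `2k+1`; but if there
were just one involution, then it would be that involution. -/
theorem IsMagicRectangleSet.one_lt_card {Γ : Type*} [AddCommGroup Γ] [Fintype Γ] (k l : ℕ)
    (hcard : Fintype.card Γ = (2 * k + 1) * 4 * (4 * l + 2))
    (h : IsMagicRectangleSet Γ (2 * k + 1) 4 (4 * l + 2)) :
    1 < Nat.card {g : Γ // g ≠ 0 ∧ g + g = 0} := by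
  classical
  obtain ⟨x, ω, δ, hx, -, hc⟩ := h
  have hsum : ∑ g : Γ, g = ((4 * l + 2) * 4) • δ := by
    rw [← hx.sum_comp (fun g => g)]
    simp only [Fintype.sum_prod_type]
    have : ∀ s : Fin (4 * l + 2), ∑ i, ∑ j, x (s, i, j) = 4 • δ := by
      intro s
      rw [Finset.sum_comm]
      simp [hc]
    simp [this, mul_nsmul']
  have hzero : (2 * k + 1) • ∑ g : Γ, g = 0 := by
    rw [hsum, ← mul_nsmul', show (2 * k + 1) * ((4 * l + 2) * 4) = Fintype.card Γ by
      rw [hcard]; ring, card_nsmul_eq_zero]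
  have : Fact (Nat.Prime 2) := ⟨Nat.prime_two⟩
  obtain ⟨u, hu⟩ := exists_prime_addOrderOf_dvd_card (G := Γ) 2
    (by rw [hcard]; exact ⟨(2 * k + 1) * 4 * (2 * l + 1), by ring⟩)
  have hu2 : u + u = 0 := by rw [← two_nsmul, ← hu, addOrderOf_nsmul_eq_zero]
  have hu0 : u ≠ 0 := by rintro rfl; simp at hu
  by_contra hcon
  rw [Finite.one_lt_card_iff_nontrivial, not_nontrivial_iff_subsingleton] at hcon
  have huniq : (Finset.univ.filter fun g : Γ => g + g = 0) = {0, u} := by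
    ext g
    simp only [Finset.mem_filter, Finset.mem_univ, true_and, Finset.mem_insert,
      Finset.mem_singleton]
    constructor
    · intro hg
      by_cases hg0 : g = 0
      · exact Or.inl hg0
      · exact Or.inr (congrArg Subtype.val (hcon.elim ⟨g, hg0, hg⟩ ⟨u, hu0, hu2⟩))
    · rintro (rfl | rfl)
      exacts [add_zero _, hu2]
  rw [sum_eq_sum_filter, huniq, Finset.sum_pair hu0.symm, zero_add, add_nsmul, mul_comm, mul_nsmul',
    two_nsmul, hu2] at hzero
  exact hu0 (by simpa using hzero)

theorem stmt17 {Γ : Type*} [AddCommGroup Γ] [Fintype Γ] (k l : ℕ) (hk : 1 ≤ k)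
    (hcard : Fintype.card Γ = (2 * k + 1) * 4 * (4 * l + 2)) :
    IsMagicRectangleSet Γ (2 * k + 1) 4 (4 * l + 2) ↔
      1 < Nat.card {g : Γ // g ≠ 0 ∧ g + g = 0} := by
  refine ⟨IsMagicRectangleSet.one_lt_card k l hcard, fun hinv => ?_⟩
  rw [← Nat.card_eq_fintype_card] at hcard
  have hodd : Odd ((2 * k + 1) * (2 * l + 1)) := Odd.mul ⟨k, rfl⟩ ⟨l, rfl⟩
  obtain ⟨x, hx, hr, hc⟩ : ZeroMRS Γ (Fin (4 * l + 2)) (Fin (2 * k + 1)) := by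
    rcases exists_embedding _ hodd (by rw [hcard]; ring) hinv with ⟨φ, hφ⟩ | ⟨φ, hφ⟩
    · exact .of_injective labels₁ zeroMRS_three₁ (by simp) φ hφ k l hk hcard
    · exact .of_injective labels₂ zeroMRS_three₂ (by simp) φ hφ k l hk hcard
  exact ⟨fun p => x p.1 p.2.1 p.2.2, 0, 0, hx, hr, hc⟩
end

section
/- Let j > 1 and let Γ be a finite Abelian group of order k. A Γ-Kotzig array of size j × k (a j × k grid in which every row is a permutation of the elements of Γ and all column sums are equal) exists if and only if j is even or Γ belongs to the class 𝒢. -/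
/-!
The result rests on two facts about the sum `σ` of all the elements of `Γ`.

* *Value of `σ`.* Cancelling `g` against `-g`, only the solutions of `g + g = 0` contribute. So
  `σ = 0` if `|Γ|` is odd, and `σ = u` if `u` is the only involution. If `u ≠ v` are involutions,
  pairing `g` with `g + u`, and then `g` with `g + v`, inside `{g | g + g = 0}` gives
  `σ = n • u = n • v` for the same `n`, which forces `n` to be even and `σ = 0`
  (`sum_univ_eq_sum_two_torsion`, `sum_eq_nsmul_of_shift`, `sum_univ_of_inClassG`).
* *Marshall Hall's theorem* (`hall_difference`): if `f : Γ → Γ` has sum `0`, then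
  `f = x - y` for some permutations `x`, `y` of `Γ`.

Summing an array over all cells gives `j • σ = k • ω = 0`; for odd `j` and `Γ` outside `𝒢` this would
say `u = 0` for the unique involution `u`. Conversely, the rows `g, -g, g, -g, …` settle even `j`.
For odd `j` and `Γ` in `𝒢` we have `σ = 0`, so Hall's theorem applied to the identity gives
permutations with `x g - y g = g`; the rows `x, -y, -id` have column sums `0`, and the remaining
`j - 3` rows alternate as before.

Hall's theorem is proved by correcting the values of `x - y` one index at a time, using a fixed index
`p` as a reservoir (`exchange`). To give `x - y` the value `a` at `q`, put `S = x p + x q - a` and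
consider the permutation `ρ` with `y (ρ i) = S - x i`. If a `ρ`-invariant set `C` contains `p` but not
`q`, then moving `x` backwards and `y` forwards along `ρ` on `C` leaves `x - y` unchanged on
`C \ {p}`, since `x (ρ⁻¹ i) - y (ρ i) = (S - y i) - (S - x i)`; a final transposition of `p` and
`q` in `y` makes the value at `q` equal to `x q - y (ρ p) = a`. If no such `C` exists, it does once
`y p` and `y q` are interchanged, because this splits the `ρ`-cycle through `p` and `q`
(`exists_separating`).
-/

/-- `Γ` belongs to the class `𝒢`: its order is odd or it has more than one involution. -/
def InClassG (Γ : Type*) [AddCommGroup Γ] [Fintype Γ] : Prop :=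
  Odd (Fintype.card Γ) ∨ 1 < Nat.card {g : Γ // g ≠ 0 ∧ g + g = 0}

/-- A `Γ`-Kotzig array of size `j × k`. -/
def IsKotzigArray (Γ : Type*) [AddCommGroup Γ] [Fintype Γ] (j k : ℕ) : Prop :=
  ∃ x : Fin j × Fin k → Γ,
    (∀ i : Fin j, Function.Bijective (fun l : Fin k => x (i, l))) ∧
    ∃ ω : Γ, ∀ l : Fin k, ∑ i : Fin j, x (i, l) = ω

/-! ### Marshall Hall's theorem -/

open Finset in
/-- The iterates of `p` under `π` before the first return to `{p, q}` form a set separating `p` from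
`q`, invariant under `π` if the return is to `p` and under `swap p q * π` if it is to `q`. -/
lemma exists_separating {α : Type*} [Fintype α] [DecidableEq α] (π : Equiv.Perm α) {p q : α}
    (hpq : p ≠ q) :
    ∃ ρ : Equiv.Perm α, (ρ = π ∨ ρ = Equiv.swap p q * π) ∧
      ∃ C : Finset α, p ∈ C ∧ q ∉ C ∧ ∀ i ∈ C, ρ i ∈ C := by
  have hex : ∃ n : ℕ, 0 < n ∧ ((π ^ n) p = p ∨ (π ^ n) p = q) :=
    ⟨orderOf π, orderOf_pos π, by simp [pow_orderOf_eq_one]⟩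
  obtain ⟨hn0, hn⟩ := Nat.find_spec hex
  have hmin : ∀ t, 0 < t → t < Nat.find hex → (π ^ t) p ≠ p ∧ (π ^ t) p ≠ q := by
    intro t ht htn
    have := Nat.find_min hex htn
    tauto
  set n := Nat.find hex
  have hpC : p ∈ (range n).image (fun t => (π ^ t) p) :=
    mem_image.2 ⟨0, by simpa using hn0, by simp⟩
  have hqC : q ∉ (range n).image (fun t => (π ^ t) p) := by
    intro h
    obtain ⟨t, ht, h⟩ := mem_image.1 h
    rcases Nat.eq_zero_or_pos t with rfl | h0
    · exact hpq (by simpa using h)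
    · exact (hmin t h0 (mem_range.1 ht)).2 h
  rcases hn with hn | hn
  · refine ⟨π, Or.inl rfl, _, hpC, hqC, ?_⟩
    intro i hi
    obtain ⟨t, ht, rfl⟩ := mem_image.1 hi
    rw [mem_range] at ht
    have hs : π ((π ^ t) p) = (π ^ (t + 1)) p := by rw [pow_succ', Equiv.Perm.mul_apply]
    rw [hs]
    rcases (Nat.succ_le_of_lt ht).lt_or_eq with h | h
    · exact mem_image.2 ⟨t + 1, mem_range.2 h, rfl⟩
    · rw [← Nat.succ_eq_add_one, h, hn]; exact hpC
  · refine ⟨Equiv.swap p q * π, Or.inr rfl, _, hpC, hqC, ?_⟩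
    intro i hi
    obtain ⟨t, ht, rfl⟩ := mem_image.1 hi
    rw [mem_range] at ht
    have hs : (Equiv.swap p q * π) ((π ^ t) p) = Equiv.swap p q ((π ^ (t + 1)) p) := by
      rw [pow_succ', Equiv.Perm.mul_apply, Equiv.Perm.mul_apply]
    rw [hs]
    rcases (Nat.succ_le_of_lt ht).lt_or_eq with h | h
    · obtain ⟨h1, h2⟩ := hmin (t + 1) (Nat.succ_pos t) h
      rw [Equiv.swap_apply_of_ne_of_ne h1 h2]
      exact mem_image.2 ⟨t + 1, mem_range.2 h, rfl⟩
    · rw [← Nat.succ_eq_add_one, h, hn, Equiv.swap_apply_right]; exact hpC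

/-- A permutation can be cut down to an invariant finite set, acting as the identity elsewhere. -/
lemma exists_perm_restrict {α : Type*} [DecidableEq α] (ρ : Equiv.Perm α) (C : Finset α)
    (hC : ∀ i ∈ C, ρ i ∈ C) :
    ∃ c : Equiv.Perm α, (∀ i ∈ C, c i = ρ i) ∧ (∀ i ∉ C, c i = i) ∧
      ∀ i ∈ C, c (ρ.symm i) = i ∧ ρ.symm i ∈ C := by
  have himg : C.image ρ = C :=
    Finset.eq_of_subset_of_card_le (Finset.image_subset_iff.2 hC)
      (Finset.card_image_of_injective _ ρ.injective).ge
  have hiff : ∀ i, ρ i ∈ C ↔ i ∈ C := by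
    refine fun i => ⟨fun h => ?_, hC i⟩
    rw [← himg] at h
    obtain ⟨t, ht, h⟩ := Finset.mem_image.1 h
    rwa [← ρ.injective h]
  have h1 : ∀ i ∈ C, Equiv.Perm.ofSubtype (ρ.subtypePerm hiff) i = ρ i := fun i hi => by
    rw [Equiv.Perm.ofSubtype_apply_of_mem _ hi]; rfl
  refine ⟨Equiv.Perm.ofSubtype (ρ.subtypePerm hiff), h1,
    fun i hi => Equiv.Perm.ofSubtype_apply_of_not_mem _ hi, fun i hi => ?_⟩
  have : ρ.symm i ∈ C := by rw [← hiff]; simpa using hi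
  exact ⟨by rw [h1 _ this]; simp, this⟩

/-- The difference of two permutations can be given any prescribed value at `q`, at the cost of
changing it only at one further index `p`. -/
lemma exchange {Γ : Type*} [AddCommGroup Γ] [Fintype Γ] [DecidableEq Γ] (x y : Equiv.Perm Γ)
    {p q : Γ} (hpq : p ≠ q) (a : Γ) :
    ∃ x' y' : Equiv.Perm Γ, x' q - y' q = a ∧
      ∀ i, i ≠ p → i ≠ q → x' i - y' i = x i - y i := by
  obtain ⟨ρ, hρ, C, hpC, hqC, hC⟩ :=
    exists_separating ((x.trans (Equiv.subLeft (x p + x q - a))).trans y.symm) hpq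
  -- Interchanging `y p` and `y q` if necessary, `ρ` satisfies `z (ρ i) = S - x i`.
  obtain ⟨z, hz, hzy⟩ : ∃ z : Equiv.Perm Γ, (∀ i, z (ρ i) = x p + x q - a - x i) ∧
      ∀ i, i ≠ p → i ≠ q → z i = y i := by
    rcases hρ with rfl | rfl
    · exact ⟨y, fun i => by simp, fun _ _ _ => rfl⟩
    · exact ⟨y * Equiv.swap p q, fun i => by simp,
        fun i h1 h2 => by simp [Equiv.swap_apply_of_ne_of_ne h1 h2]⟩
  obtain ⟨c, hc1, hc2, hc3⟩ := exists_perm_restrict ρ C hC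
  refine ⟨x * c⁻¹, z * c * Equiv.swap p q, ?_, ?_⟩
  · have : c⁻¹ q = q := by rw [Equiv.Perm.inv_eq_iff_eq, hc2 q hqC]
    simp only [Equiv.Perm.mul_apply, this, Equiv.swap_apply_right, hc1 p hpC, hz]
    abel
  · intro i hip hiq
    rw [← hzy i hip hiq]
    simp only [Equiv.Perm.mul_apply, Equiv.swap_apply_of_ne_of_ne hip hiq]
    by_cases hi : i ∈ C
    · have : c⁻¹ i = ρ.symm i := by rw [Equiv.Perm.inv_eq_iff_eq, (hc3 i hi).1]
      have h2 := hz (ρ.symm i)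
      rw [Equiv.apply_symm_apply] at h2
      rw [this, hc1 i hi, hz, h2]
      abel
    · have : c⁻¹ i = i := by rw [Equiv.Perm.inv_eq_iff_eq, hc2 i hi]
      rw [this, hc2 i hi]

/-- Marshall Hall's theorem: a family indexed by a finite Abelian group and of sum zero is the
difference of two permutations of the group. -/
theorem hall_difference {Γ : Type*} [AddCommGroup Γ] [Fintype Γ] (f : Γ → Γ)
    (hf : ∑ g, f g = 0) : ∃ x y : Equiv.Perm Γ, ∀ g, x g - y g = f g := by
  classical
  have key : ∀ s : Finset Γ, (0 : Γ) ∉ s →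
      ∃ x y : Equiv.Perm Γ, ∀ g ∈ s, x g - y g = f g := by
    intro s
    induction s using Finset.induction_on with
    | empty => exact fun _ => ⟨1, 1, by simp⟩
    | insert q s hq ih =>
      intro h0
      rw [Finset.mem_insert, not_or] at h0
      obtain ⟨x, y, hxy⟩ := ih h0.2
      obtain ⟨x', y', h1, h2⟩ := exchange x y h0.1 (f q)
      refine ⟨x', y', fun g hg => ?_⟩
      rcases Finset.mem_insert.1 hg with rfl | hg
      · exact h1
      · rw [h2 g (fun h => h0.2 (h ▸ hg)) (fun h => hq (h ▸ hg)), hxy g hg]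
  obtain ⟨x, y, hxy⟩ := key (Finset.univ.erase 0) (by simp)
  refine ⟨x, y, fun g => ?_⟩
  by_cases hg : g = 0
  · subst hg
    -- Both sides have total sum zero, so agreement off `0` gives agreement at `0`.
    have h : ∑ g, (x g - y g) = ∑ g, f g := by
      rw [Finset.sum_sub_distrib, Equiv.sum_comp x (fun g => g), Equiv.sum_comp y (fun g => g),
        hf, sub_self]
    rw [← Finset.add_sum_erase _ _ (Finset.mem_univ (0 : Γ)),
      ← Finset.add_sum_erase _ f (Finset.mem_univ (0 : Γ)), Finset.sum_congr rfl hxy] at h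
    exact add_right_cancel h
  · exact hxy g (by simp [hg])

/-! ### The sum of all the elements of the group -/

lemma sum_univ_eq_sum_two_torsion {Γ : Type*} [AddCommGroup Γ] [Fintype Γ] [DecidableEq Γ] :
    ∑ g : Γ, g = ∑ g ∈ Finset.univ.filter (fun g : Γ => g + g = 0), g := by
  rw [← Finset.sum_filter_add_sum_filter_not Finset.univ (fun g : Γ => g + g = 0),
    add_eq_left]
  refine Finset.sum_involution (fun g _ => -g) (fun g _ => by simp) ?_ ?_ (fun g _ => by simp)
  · intro g hg _ h
    rw [Finset.mem_filter] at hg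
    exact hg.2 (by nth_rewrite 1 [← h]; simp)
  · intro g hg
    rw [Finset.mem_filter] at hg ⊢
    refine ⟨Finset.mem_univ _, fun h => hg.2 ?_⟩
    rw [← neg_add, neg_eq_zero] at h
    exact h

/-- Each pair `{g, g + u}` in `s` contributes `g + (g + u) = u` to the sum. -/
lemma sum_eq_nsmul_of_shift {Γ : Type*} [AddCommGroup Γ] [DecidableEq Γ] {u : Γ} (hu : u ≠ 0)
    (huu : u + u = 0) (s : Finset Γ) (h2 : ∀ g ∈ s, g + g = 0) (hs : ∀ g ∈ s, g + u ∈ s) :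
    ∃ n : ℕ, s.card = 2 * n ∧ ∑ g ∈ s, g = n • u := by
  induction s using Finset.strongInduction with
  | H s ih =>
    rcases s.eq_empty_or_nonempty with rfl | ⟨g, hg⟩
    · exact ⟨0, by simp⟩
    have hgu : g + u ∈ s.erase g := Finset.mem_erase.2 ⟨by simpa using hu, hs g hg⟩
    have hss : (s.erase g).erase (g + u) ⊂ s :=
      (Finset.erase_ssubset hgu).trans (Finset.erase_ssubset hg)
    obtain ⟨n, hn, hsum⟩ := ih _ hss (fun x hx => h2 x (hss.1 hx)) (by
      intro x hx
      simp only [Finset.mem_erase] at hx ⊢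
      refine ⟨fun h => hx.2.1 (add_right_cancel h), fun h => hx.1 ?_, hs x hx.2.2⟩
      rw [← h, add_assoc, huu, add_zero])
    refine ⟨n + 1, ?_, ?_⟩
    · rw [← Finset.card_erase_add_one hg, ← Finset.card_erase_add_one hgu, hn]
      ring
    · rw [← Finset.add_sum_erase _ _ hg, ← Finset.add_sum_erase _ _ hgu, hsum, ← add_assoc,
        ← add_assoc, h2 g hg, zero_add, succ_nsmul']

lemma sum_univ_of_inClassG {Γ : Type*} [AddCommGroup Γ] [Fintype Γ] (h : InClassG Γ) :
    ∑ g : Γ, g = 0 := by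
  classical
  rw [sum_univ_eq_sum_two_torsion]
  rcases h with hodd | hinv
  · refine Finset.sum_eq_zero fun g hg => ?_
    rw [Finset.mem_filter] at hg
    obtain ⟨m, hm⟩ := hodd
    have h1 := card_nsmul_eq_zero (G := Γ) (x := g)
    rwa [hm, add_nsmul, mul_comm, mul_nsmul', two_nsmul, hg.2, nsmul_zero, zero_add,
      one_nsmul] at h1
  · rw [Nat.card_eq_fintype_card, Fintype.one_lt_card_iff] at hinv
    obtain ⟨⟨u, hu, huu⟩, ⟨v, hv, hvv⟩, huv⟩ := hinv
    have huv : u ≠ v := fun h => huv (Subtype.ext h)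
    have hcl : ∀ w : Γ, w + w = 0 → ∀ g ∈ Finset.univ.filter (fun g : Γ => g + g = 0),
        g + w ∈ Finset.univ.filter (fun g : Γ => g + g = 0) := by
      intro w hw g hg
      rw [Finset.mem_filter] at hg ⊢
      exact ⟨Finset.mem_univ _, by rw [add_add_add_comm, hg.2, hw, add_zero]⟩
    have h2 : ∀ g ∈ Finset.univ.filter (fun g : Γ => g + g = 0), g + g = 0 :=
      fun g hg => (Finset.mem_filter.1 hg).2
    obtain ⟨n, hn, hsn⟩ := sum_eq_nsmul_of_shift hu huu _ h2 (hcl u huu)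
    obtain ⟨m, hm, hsm⟩ := sum_eq_nsmul_of_shift hv hvv _ h2 (hcl v hvv)
    obtain rfl : n = m := by omega
    rcases Nat.even_or_odd' n with ⟨t, rfl | rfl⟩
    · rw [hsn, mul_comm, mul_nsmul', two_nsmul, huu, nsmul_zero]
    · rw [hsn] at hsm
      simp only [add_nsmul, mul_comm 2 t, mul_nsmul', two_nsmul, huu, hvv, nsmul_zero, zero_add,
        one_nsmul] at hsm
      exact absurd hsm huv

/-- Outside `𝒢` the sum of all the elements is an involution, namely the only one. -/
lemma sum_univ_of_not_inClassG {Γ : Type*} [AddCommGroup Γ] [Fintype Γ] (h : ¬ InClassG Γ) :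
    ∑ g : Γ, g ≠ 0 ∧ 2 • ∑ g : Γ, g = 0 := by
  classical
  rw [InClassG, not_or, Nat.not_odd_iff_even, not_lt, Nat.card_eq_fintype_card,
    Fintype.card_le_one_iff] at h
  obtain ⟨heven, huniq⟩ := h
  have : Fact (Nat.Prime 2) := ⟨Nat.prime_two⟩
  obtain ⟨u, hu⟩ := exists_prime_addOrderOf_dvd_card (G := Γ) 2 heven.two_dvd
  have hu0 : u ≠ 0 := by
    rintro rfl
    simp at hu
  have huu : u + u = 0 := by
    rw [← two_nsmul, ← hu, addOrderOf_nsmul_eq_zero]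
  have hE : Finset.univ.filter (fun g : Γ => g + g = 0) = {0, u} := by
    ext g
    simp only [Finset.mem_filter, Finset.mem_univ, true_and, Finset.mem_insert,
      Finset.mem_singleton]
    constructor
    · intro hg
      by_cases h0 : g = 0
      · exact Or.inl h0
      · exact Or.inr (congrArg Subtype.val (huniq ⟨g, h0, hg⟩ ⟨u, hu0, huu⟩))
    · rintro (rfl | rfl)
      · simp
      · exact huu
  rw [sum_univ_eq_sum_two_torsion, hE, Finset.sum_pair hu0.symm, zero_add, two_nsmul]
  exact ⟨hu0, huu⟩

/-! ### Kotzig arrays -/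

lemma isKotzigArray_of_rows {Γ : Type*} [AddCommGroup Γ] [Fintype Γ] {j k : ℕ}
    (hk : Fintype.card Γ = k) (r : ℕ → Equiv.Perm Γ)
    (hr : ∀ g, ∑ i ∈ Finset.range j, r i g = 0) : IsKotzigArray Γ j k := by
  let e := (Fintype.equivFinOfCardEq hk).symm
  refine ⟨fun c => r c.1 (e c.2), fun i => ((e.trans (r i)).bijective), 0, fun l => ?_⟩
  rw [← hr (e l), Finset.sum_range]

/-- The rows `g, -g, g, -g, …`. -/
def altRow (Γ : Type*) [AddCommGroup Γ] (i : ℕ) : Equiv.Perm Γ :=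
  if Even i then Equiv.refl Γ else Equiv.neg Γ

lemma sum_altRow {Γ : Type*} [AddCommGroup Γ] (n : ℕ) (g : Γ) :
    ∑ i ∈ Finset.range (2 * n), altRow Γ i g = 0 := by
  induction n with
  | zero => simp
  | succ n ih =>
    rw [Nat.mul_succ, Finset.sum_range_succ, Finset.sum_range_succ, ih]
    simp [altRow]

theorem stmt19 {Γ : Type*} [AddCommGroup Γ] [Fintype Γ] (j k : ℕ) (hj : 1 < j)
    (hk : Fintype.card Γ = k) :
    IsKotzigArray Γ j k ↔ Even j ∨ InClassG Γ := by
  constructor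
  · rintro ⟨x, hx, ω, hω⟩
    by_contra hcon
    rw [not_or, Nat.not_even_iff_odd] at hcon
    obtain ⟨⟨m, hm⟩, hG⟩ := hcon
    obtain ⟨hσ, h2σ⟩ := sum_univ_of_not_inClassG hG
    -- Summing all cells by columns gives `k • ω = 0`, by rows `j • ∑ g, g`.
    have h1 : ∑ l : Fin k, ∑ i : Fin j, x (i, l) = 0 := by
      simp only [hω, Finset.sum_const, Finset.card_univ, Fintype.card_fin]
      rw [← hk, card_nsmul_eq_zero]
    rw [Finset.sum_comm] at h1
    have h3 : ∀ i : Fin j, ∑ l : Fin k, x (i, l) = ∑ g : Γ, g := fun i =>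
      (hx i).sum_comp (fun g => g)
    simp only [h3, Finset.sum_const, Finset.card_univ, Fintype.card_fin] at h1
    rw [hm, add_nsmul, mul_comm, mul_nsmul', h2σ, nsmul_zero, zero_add, one_nsmul] at h1
    exact hσ h1
  · intro h
    by_cases hev : Even j
    · obtain ⟨m, rfl⟩ := hev
      exact isKotzigArray_of_rows hk (altRow Γ) fun g => by rw [← two_mul, sum_altRow]
    · obtain ⟨x, y, hxy⟩ := hall_difference (fun g : Γ => g)
        (sum_univ_of_inClassG (h.resolve_left hev))
      obtain ⟨m, rfl⟩ : ∃ m, j = 2 * m + 3 := by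
        obtain ⟨t, rfl⟩ := Nat.not_even_iff_odd.1 hev
        exact ⟨t - 1, by omega⟩
      refine isKotzigArray_of_rows hk (fun i => match i with
        | 0 => x
        | 1 => y.trans (Equiv.neg Γ)
        | 2 => Equiv.neg Γ
        | i + 3 => altRow Γ i) fun g => ?_
      rw [Finset.sum_range_succ', Finset.sum_range_succ', Finset.sum_range_succ']
      simp only [sum_altRow, Equiv.trans_apply, Equiv.neg_apply]
      nth_rewrite 1 [← hxy g]
      abel
end
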